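/- Let T > 0 and L, M ≥ 0. Let b¹ : [0,T] × ℝ → ℝ be such that b¹ and its partial derivative ∂_s b¹ in the first variable exist, are continuous, and satisfy |b¹(s,c) − b¹(s,c')| ≤ L|c − c'| and |∂_s b¹(s,c) − ∂_s b¹(s,c')| ≤ L|c − c'| for all s ∈ [0,T] and c, c' ∈ ℝ. Let b² : [0,T] → ℝ be continuously differentiable with |b²(s)| ≤ M and |(b²)'(s)| ≤ M for all s ∈ [0,T]. Then there exists a constant C ≥ 0 such that for all continuously differentiable x, y : ℝ → ℝ and every t ∈ [0,T], setting g_x(s) := b¹(s, x(t)) + b²(s) x(s) and g_y(s) := b¹(s, y(t)) + b²(s) y(s), one has ∫_0^T (g_x(s) − g_y(s))² ds + ∫_0^T (g_x'(s) − g_y'(s))² ds ≤ C ( ∫_0^T (x(s) − y(s))² ds + ∫_0^T (x'(s) − y'(s))² ds ). -/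

import Mathlib

open MeasureTheory Set Real

theorem sobolev_aux (T : ℝ) (hT : 0 < T) (u v : ℝ → ℝ) (hu : ∀ s, HasDerivAt u (v s) s)
    (hv : Continuous v) (t : ℝ) (ht : t ∈ Set.Icc (0 : ℝ) T) :
    T * u t ^ 2 ≤ (1 + T) * ((∫ s in (0:ℝ)..T, u s ^ 2) + ∫ s in (0:ℝ)..T, v s ^ 2) := by
  have huc : Continuous u := continuous_iff_continuousAt.2 fun s => (hu s).continuousAt
  set A := ∫ s in (0:ℝ)..T, u s ^ 2 with hA
  set B := ∫ s in (0:ℝ)..T, v s ^ 2 with hB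
  have hB0 : 0 ≤ B := intervalIntegral.integral_nonneg hT.le fun s _ => sq_nonneg _
  have hAB : (∫ s in (0:ℝ)..T, (u s ^ 2 + v s ^ 2)) = A + B :=
    intervalIntegral.integral_add ((huc.pow 2).intervalIntegrable _ _)
      ((hv.pow 2).intervalIntegrable _ _)
  have key : ∀ s ∈ Set.Icc (0:ℝ) T, u t ^ 2 - (A + B) ≤ u s ^ 2 := by
    intro s hs
    have hftc : (∫ r in s..t, 2 * u r * v r) = u t ^ 2 - u s ^ 2 := by
      apply intervalIntegral.integral_eq_sub_of_hasDerivAt (f := fun r => u r ^ 2)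
      · intro r _
        have h := (hu r).pow 2
        simp only [Nat.cast_ofNat, Nat.reduceSub, pow_one] at h
        exact h
      · exact ((continuous_const.mul huc).mul hv).intervalIntegrable _ _
    have h1 : |∫ r in s..t, 2 * u r * v r| ≤ |∫ r in s..t, (u r ^ 2 + v r ^ 2)| := by
      rw [← Real.norm_eq_abs]
      apply intervalIntegral.norm_integral_le_abs_of_norm_le
      · refine Filter.Eventually.of_forall fun r => ?_
        rw [Real.norm_eq_abs, abs_le]
        constructor <;> nlinarith [sq_nonneg (u r + v r), sq_nonneg (u r - v r)]
      · exact ((huc.pow 2).add (hv.pow 2)).intervalIntegrable _ _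
    have h2 : |∫ r in s..t, (u r ^ 2 + v r ^ 2)| ≤ |∫ r in (0:ℝ)..T, (u r ^ 2 + v r ^ 2)| := by
      apply intervalIntegral.abs_integral_mono_interval
      · rw [uIoc_of_le hT.le]
        intro r hr
        rw [mem_uIoc] at hr
        rcases hr with h | h
        · exact ⟨hs.1.trans_lt h.1, h.2.trans ht.2⟩
        · exact ⟨ht.1.trans_lt h.1, h.2.trans hs.2⟩
      · exact Filter.Eventually.of_forall fun r => by
          show (0:ℝ) ≤ u r ^ 2 + v r ^ 2
          positivity
      · exact ((huc.pow 2).add (hv.pow 2)).intervalIntegrable _ _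
    have hA0 : 0 ≤ A := intervalIntegral.integral_nonneg hT.le fun s _ => sq_nonneg _
    rw [hAB, abs_of_nonneg (add_nonneg hA0 hB0)] at h2
    rw [hftc] at h1
    linarith [le_abs_self (u t ^ 2 - u s ^ 2)]
  have h3 := intervalIntegral.integral_mono_on (μ := volume) hT.le
    (continuous_const.intervalIntegrable _ _)
    ((huc.pow 2).intervalIntegrable _ _) key
  rw [intervalIntegral.integral_const] at h3
  change (T - 0) * _ ≤ A at h3
  nlinarith

theorem stmt_11 (T L M : ℝ) (hT : 0 < T) (hL : 0 ≤ L) (hM : 0 ≤ M)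
    (b₁ db₁ : ℝ → ℝ → ℝ)
    (hb₁deriv : ∀ c : ℝ, ∀ s ∈ Set.Icc (0 : ℝ) T,
      HasDerivWithinAt (fun r => b₁ r c) (db₁ s c) (Set.Icc 0 T) s)
    (hb₁cont : ContinuousOn (fun p : ℝ × ℝ => b₁ p.1 p.2) (Set.Icc 0 T ×ˢ Set.univ))
    (hdb₁cont : ContinuousOn (fun p : ℝ × ℝ => db₁ p.1 p.2) (Set.Icc 0 T ×ˢ Set.univ))
    (hb₁lip : ∀ s ∈ Set.Icc (0 : ℝ) T, ∀ c c' : ℝ, |b₁ s c - b₁ s c'| ≤ L * |c - c'|)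
    (hdb₁lip : ∀ s ∈ Set.Icc (0 : ℝ) T, ∀ c c' : ℝ, |db₁ s c - db₁ s c'| ≤ L * |c - c'|)
    (b₂ : ℝ → ℝ) (hb₂ : ContDiff ℝ 1 b₂)
    (hb₂bd : ∀ s ∈ Set.Icc (0 : ℝ) T, |b₂ s| ≤ M)
    (hdb₂bd : ∀ s ∈ Set.Icc (0 : ℝ) T, |deriv b₂ s| ≤ M) :
    ∃ C : ℝ, 0 ≤ C ∧ ∀ x y : ℝ → ℝ, ContDiff ℝ 1 x → ContDiff ℝ 1 y →
      ∀ t ∈ Set.Icc (0 : ℝ) T,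
      (∫ s in (0:ℝ)..T,
          ((b₁ s (x t) + b₂ s * x s) - (b₁ s (y t) + b₂ s * y s)) ^ 2) +
        (∫ s in (0:ℝ)..T,
          ((db₁ s (x t) + deriv b₂ s * x s + b₂ s * deriv x s)
            - (db₁ s (y t) + deriv b₂ s * y s + b₂ s * deriv y s)) ^ 2) ≤
      C * ((∫ s in (0:ℝ)..T, (x s - y s) ^ 2) +
        ∫ s in (0:ℝ)..T, (deriv x s - deriv y s) ^ 2) := by
  refine ⟨5 * L ^ 2 * (1 + T) + 5 * M ^ 2, by positivity, ?_⟩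
  intro x y hx hy t ht
  have hxd : ∀ s, HasDerivAt x (deriv x s) s := fun s =>
    (hx.differentiable one_ne_zero s).hasDerivAt
  have hyd : ∀ s, HasDerivAt y (deriv y s) s := fun s =>
    (hy.differentiable one_ne_zero s).hasDerivAt
  have hx' : Continuous (deriv x) := hx.continuous_deriv le_rfl
  have hy' : Continuous (deriv y) := hy.continuous_deriv le_rfl
  have hb' : Continuous (deriv b₂) := hb₂.continuous_deriv le_rfl
  have hxc := hx.continuous
  have hyc := hy.continuous
  have hbc := hb₂.continuous
  have hsob := sobolev_aux T hT (fun s => x s - y s) (fun s => deriv x s - deriv y s)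
    (fun s => (hxd s).sub (hyd s)) (hx'.sub hy') t ht
  have hc1 : ∀ c, ContinuousOn (fun s => b₁ s c) (Set.Icc 0 T) := fun c =>
    hb₁cont.comp (f := fun s : ℝ => (s, c)) (by fun_prop) (fun s hs => ⟨hs, mem_univ _⟩)
  have hc2 : ∀ c, ContinuousOn (fun s => db₁ s c) (Set.Icc 0 T) := fun c =>
    hdb₁cont.comp (f := fun s : ℝ => (s, c)) (by fun_prop) (fun s hs => ⟨hs, mem_univ _⟩)
  have iA : IntervalIntegrable (fun s => (x s - y s) ^ 2) volume 0 T :=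
    ((hxc.sub hyc).pow 2).intervalIntegrable _ _
  have iB : IntervalIntegrable (fun s => (deriv x s - deriv y s) ^ 2) volume 0 T :=
    ((hx'.sub hy').pow 2).intervalIntegrable _ _
  have hA0 : 0 ≤ ∫ s in (0:ℝ)..T, (x s - y s) ^ 2 :=
    intervalIntegral.integral_nonneg hT.le fun s _ => sq_nonneg _
  have hB0 : 0 ≤ ∫ s in (0:ℝ)..T, (deriv x s - deriv y s) ^ 2 :=
    intervalIntegral.integral_nonneg hT.le fun s _ => sq_nonneg _
  have sqb : ∀ p K d : ℝ, |p| ≤ K * |d| → p ^ 2 ≤ K ^ 2 * d ^ 2 := by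
    intro p K d h
    have h' := pow_le_pow_left₀ (abs_nonneg p) h 2
    rwa [mul_pow, sq_abs, sq_abs] at h'
  have sqm : ∀ p d : ℝ, |p| ≤ M → (p * d) ^ 2 ≤ M ^ 2 * d ^ 2 := by
    intro p d h
    apply sqb
    rw [abs_mul]
    exact mul_le_mul_of_nonneg_right h (abs_nonneg d)
  have I1 : (∫ s in (0:ℝ)..T,
          ((b₁ s (x t) + b₂ s * x s) - (b₁ s (y t) + b₂ s * y s)) ^ 2) ≤
      ∫ s in (0:ℝ)..T, (2 * L ^ 2 * (x t - y t) ^ 2 + 2 * M ^ 2 * (x s - y s) ^ 2) := by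
    apply intervalIntegral.integral_mono_on hT.le
    · apply ContinuousOn.intervalIntegrable
      rw [uIcc_of_le hT.le]
      have := hc1 (x t)
      have := hc1 (y t)
      exact ((((hc1 (x t)).add (hbc.mul hxc).continuousOn).sub
        ((hc1 (y t)).add (hbc.mul hyc).continuousOn)).pow 2)
    · exact intervalIntegrable_const.add (iA.const_mul _)
    · intro s hs
      have e1 := sqb _ _ _ (hb₁lip s hs (x t) (y t))
      have e2 := sqm _ (x s - y s) (hb₂bd s hs)
      nlinarith [sq_nonneg ((b₁ s (x t) - b₁ s (y t)) - b₂ s * (x s - y s))]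
  have I2 : (∫ s in (0:ℝ)..T,
          ((db₁ s (x t) + deriv b₂ s * x s + b₂ s * deriv x s)
            - (db₁ s (y t) + deriv b₂ s * y s + b₂ s * deriv y s)) ^ 2) ≤
      ∫ s in (0:ℝ)..T, (3 * L ^ 2 * (x t - y t) ^ 2 + 3 * M ^ 2 * (x s - y s) ^ 2
        + 3 * M ^ 2 * (deriv x s - deriv y s) ^ 2) := by
    apply intervalIntegral.integral_mono_on hT.le
    · apply ContinuousOn.intervalIntegrable
      rw [uIcc_of_le hT.le]
      exact (((((hc2 (x t)).add (hb'.mul hxc).continuousOn).add (hbc.mul hx').continuousOn).sub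
        (((hc2 (y t)).add (hb'.mul hyc).continuousOn).add (hbc.mul hy').continuousOn)).pow 2)
    · exact (intervalIntegrable_const.add (iA.const_mul _)).add (iB.const_mul _)
    · intro s hs
      have e1 := sqb _ _ _ (hdb₁lip s hs (x t) (y t))
      have e2 := sqm _ (x s - y s) (hdb₂bd s hs)
      have e3 := sqm _ (deriv x s - deriv y s) (hb₂bd s hs)
      have e : ∀ p q r : ℝ, (p + q + r) ^ 2 ≤ 3 * p ^ 2 + 3 * q ^ 2 + 3 * r ^ 2 := by
        intro p q r
        nlinarith [sq_nonneg (p - q), sq_nonneg (p - r), sq_nonneg (q - r)]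
      have e4 := e (db₁ s (x t) - db₁ s (y t)) (deriv b₂ s * (x s - y s))
        (b₂ s * (deriv x s - deriv y s))
      have e5 : (db₁ s (x t) + deriv b₂ s * x s + b₂ s * deriv x s)
            - (db₁ s (y t) + deriv b₂ s * y s + b₂ s * deriv y s)
          = (db₁ s (x t) - db₁ s (y t)) + (deriv b₂ s * (x s - y s))
            + (b₂ s * (deriv x s - deriv y s)) := by ring
      rw [e5]
      linarith
  rw [intervalIntegral.integral_add intervalIntegrable_const (iA.const_mul _),
    intervalIntegral.integral_const, intervalIntegral.integral_const_mul, smul_eq_mul] at I1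
  rw [intervalIntegral.integral_add (intervalIntegrable_const.add (iA.const_mul _))
      (iB.const_mul _),
    intervalIntegral.integral_add intervalIntegrable_const (iA.const_mul _),
    intervalIntegral.integral_const, intervalIntegral.integral_const_mul,
    intervalIntegral.integral_const_mul, smul_eq_mul] at I2
  have h6 := mul_le_mul_of_nonneg_left hsob (by positivity : 0 ≤ 5 * L ^ 2)
  have h7 := mul_nonneg (sq_nonneg M) hB0
  have h8 := mul_nonneg (sq_nonneg M) hA0
  nlinarith
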